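/- Let m < -1 and let a, b : ℝ^M × ℝ × ℝ → ℂ satisfy the product-type symbol estimates |∂_z^γ ∂_ξ^α ∂_η^β a(z,ξ,η)| ≤ C ⟨ξ;η⟩^{m-α} ⟨η⟩^{m-β} (uniformly for z in compact sets), and similarly for b. Then c(z,ξ,η) = ∬ a(z, ξ-ζ, η-τ) b(z, ζ, τ) dζ dτ satisfies the same estimates: |∂_z^γ ∂_ξ^α ∂_η^β c(z,ξ,η)| ≤ C' ⟨ξ;η⟩^{m-α} ⟨η⟩^{m-β}. -/

import Mathlib

noncomputable section

/-- Directional derivative of a function on `ℝ^M` in the `i`-th coordinate direction. -/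
def dirDeriv {M : ℕ} (i : Fin M) (f : (Fin M → ℝ) → ℂ) : (Fin M → ℝ) → ℂ :=
  fun z => fderiv ℝ f z (Pi.single i 1)

/-- Iterated directional derivatives `∂_z^γ` along a list of coordinate directions. -/
def dirDerivs {M : ℕ} (L : List (Fin M)) (f : (Fin M → ℝ) → ℂ) : (Fin M → ℝ) → ℂ :=
  L.foldr dirDeriv f

/-- `a : ℝ^M × ℝ × ℝ → ℂ` is a product-type symbol of order `(m, m)`: for all
multiindices `γ` (encoded as lists of coordinate directions), integers `α, β ≥ 0` and
compact `K ⊂ ℝ^M`, `|∂_z^γ ∂_ξ^α ∂_η^β a(z,ξ,η)| ≤ C ⟨ξ;η⟩^{m-α} ⟨η⟩^{m-β}` on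
`K × ℝ × ℝ`, where `⟨ξ;η⟩ = √(1+ξ²+η²)` and `⟨η⟩ = √(1+η²)`. -/
def IsProdSymbolOfOrder {M : ℕ} (m : ℝ) (a : (Fin M → ℝ) → ℝ → ℝ → ℂ) : Prop :=
  ∀ (L : List (Fin M)) (α β : ℕ) (K : Set (Fin M → ℝ)), IsCompact K →
    ∃ C : ℝ, ∀ z ∈ K, ∀ ξ η : ℝ,
      ‖dirDerivs L (fun z' =>
          iteratedDeriv α (fun ξ' => iteratedDeriv β (fun η' => a z' ξ' η') η) ξ) z‖ ≤
        C * Real.sqrt (1 + ξ ^ 2 + η ^ 2) ^ (m - α) * Real.sqrt (1 + η ^ 2) ^ (m - β)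

/-!
Since `⟨x⟩ ≤ ⟨x - t⟩ + ⟨t⟩` for both brackets, a product of two weights of orders below `-1` at
`x - t` and `t` is bounded by the weight at `x` times an integrable function of `t`; this gives the
zeroth-order estimate for the convolution. Each derivative must then gain a power of a bracket.
Because `1 + ξ² + η²` and `1 + η²` are elliptic, it suffices that `ξ∂_ξ`, `η∂_ξ` and `η∂_η` lose
nothing. Such a field acts on a convolution almost as a derivation: write `ξ = (ξ - ζ) + ζ`, and
where the coefficient lands on the second factor integrate by parts to bring the derivative along.
-/

open Asymptotics Filter MeasureTheory Set
open scoped ContDiff Topology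

section FDerivAlong

variable {V F : Type*} [NormedAddCommGroup V] [NormedSpace ℝ V]
  [NormedAddCommGroup F] [NormedSpace ℝ F] {f g : V → F}

/-- The directional derivative `∂_v f`, as an operator on functions. -/
def fderivAlong (v : V) (f : V → F) : V → F := fun x => fderiv ℝ f x v

lemma fderivAlong_apply (v : V) (f : V → F) (x : V) : fderivAlong v f x = fderiv ℝ f x v := rfl

lemma contDiff_fderivAlong (hf : ContDiff ℝ ∞ f) (v : V) : ContDiff ℝ ∞ (fderivAlong v f) :=
  (hf.fderiv_right (by simp)).clm_apply contDiff_const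

lemma contDiff_iterate_fderivAlong (hf : ContDiff ℝ ∞ f) (v : V) (n : ℕ) :
    ContDiff ℝ ∞ ((fderivAlong v)^[n] f) :=
  Function.Iterate.rec _ hf (fun _ h => contDiff_fderivAlong h v) n

lemma fderivAlong_const (v : V) (c : F) : fderivAlong v (fun _ => c) = 0 := by
  ext; simp [fderivAlong]

lemma fderivAlong_add (hf : Differentiable ℝ f) (hg : Differentiable ℝ g) (v : V) :
    fderivAlong v (f + g) = fderivAlong v f + fderivAlong v g := by
  ext x; simp [fderivAlong, fderiv_add (hf x) (hg x)]

lemma fderivAlong_add_left (v w : V) (f : V → F) :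
    fderivAlong (v + w) f = fderivAlong v f + fderivAlong w f := by
  ext; simp [fderivAlong]

lemma fderivAlong_smul_left (c : ℝ) (v : V) (f : V → F) :
    fderivAlong (c • v) f = c • fderivAlong v f := by
  ext; simp [fderivAlong]

lemma fderivAlong_sum_smul_left {ι : Type*} (s : Finset ι) (c : ι → ℝ) (v : ι → V) (f : V → F) :
    fderivAlong (∑ i ∈ s, c i • v i) f = ∑ i ∈ s, c i • fderivAlong (v i) f := by
  ext; simp [fderivAlong]

lemma fderivAlong_mul {f g : V → ℂ} (hf : Differentiable ℝ f) (hg : Differentiable ℝ g) (v : V) :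
    fderivAlong v (f * g) = fderivAlong v f * g + f * fderivAlong v g := by
  ext x
  simp [fderivAlong, fderiv_mul (hf x) (hg x)]
  ring

lemma fderivAlong_inv {f : V → ℂ} (hf : Differentiable ℝ f) (h0 : ∀ x, f x ≠ 0) (v : V) :
    fderivAlong v f⁻¹ = (fun _ => -1) * (f⁻¹ * f⁻¹ * fderivAlong v f) := by
  ext x
  have hcomp := ((hasFDerivAt_inv' (𝕜 := ℝ) (h0 x)).comp x (hf x).hasFDerivAt).fderiv
  calc fderivAlong v f⁻¹ x = -((f x)⁻¹ * fderiv ℝ f x v * (f x)⁻¹) := by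
        simpa using! DFunLike.congr_fun hcomp v
    _ = _ := by simp only [fderivAlong, Pi.mul_apply, Pi.inv_apply]; ring

lemma fderivAlong_comm (hf : ContDiff ℝ ∞ f) (v w : V) :
    fderivAlong v (fderivAlong w f) = fderivAlong w (fderivAlong v f) := by
  have second (v w x : V) : fderivAlong v (fderivAlong w f) x = fderiv ℝ (fderiv ℝ f) x v w := by
    have hd : DifferentiableAt ℝ (fderiv ℝ f) x :=
      (hf.fderiv_right (m := ∞) (by simp)).differentiable (by simp) x
    have hcomp := (hd.hasFDerivAt.clm_apply (hasFDerivAt_const w x)).fderiv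
    simpa using! DFunLike.congr_fun hcomp v
  ext x
  rw [second, second]
  exact ((contDiff_infty.1 hf 2).contDiffAt.isSymmSndFDerivAt (by simp)) v w

lemma iterate_fderivAlong_comm (hf : ContDiff ℝ ∞ f) (v w : V) (n : ℕ) :
    (fderivAlong v)^[n] (fderivAlong w f) = fderivAlong w ((fderivAlong v)^[n] f) := by
  induction n with
  | zero => rfl
  | succ n ih =>
    rw [Function.iterate_succ_apply', Function.iterate_succ_apply', ih,
      fderivAlong_comm (contDiff_iterate_fderivAlong hf v n)]

lemma iteratedDeriv_comp_add_smul (hf : ContDiff ℝ ∞ f) (x v : V) (n : ℕ) :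
    iteratedDeriv n (fun s : ℝ => f (x + s • v)) = fun s => (fderivAlong v)^[n] f (x + s • v) := by
  induction n with
  | zero => simp
  | succ n ih =>
    ext s
    have hline : HasDerivAt (fun s : ℝ => x + s • v) v s := by
      simpa using ((hasDerivAt_id s).smul_const v).const_add x
    have hdiff := (contDiff_iterate_fderivAlong hf v n).differentiable (by simp) (x + s • v)
    rw [iteratedDeriv_succ, ih, Function.iterate_succ_apply']
    exact (hdiff.hasFDerivAt.comp_hasDerivAt s hline).deriv

end FDerivAlong

section JapaneseBracket

variable {V : Type*} [NormedAddCommGroup V]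

/-- The Japanese bracket `⟨x⟩ = √(1 + ‖x‖²)`. -/
def japaneseBracket (x : V) : ℝ := √(1 + ‖x‖ ^ 2)

lemma sq_japaneseBracket (x : V) : japaneseBracket x ^ 2 = 1 + ‖x‖ ^ 2 :=
  Real.sq_sqrt (by positivity)

lemma one_le_japaneseBracket (x : V) : 1 ≤ japaneseBracket x :=
  Real.one_le_sqrt.2 (by simp)

lemma japaneseBracket_pos (x : V) : 0 < japaneseBracket x :=
  one_pos.trans_le (one_le_japaneseBracket x)

lemma norm_le_japaneseBracket (x : V) : ‖x‖ ≤ japaneseBracket x :=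
  Real.le_sqrt_of_sq_le (by linarith)

lemma japaneseBracket_le_japaneseBracket {W : Type*} [NormedAddCommGroup W] {x : V} {y : W}
    (h : ‖x‖ ≤ ‖y‖) : japaneseBracket x ≤ japaneseBracket y := by
  unfold japaneseBracket; gcongr

lemma japaneseBracket_add_le (x y : V) :
    japaneseBracket (x + y) ≤ japaneseBracket x + japaneseBracket y := by
  have hx := japaneseBracket_pos x
  have hy := japaneseBracket_pos y
  have hprod : ‖x‖ * ‖y‖ ≤ japaneseBracket x * japaneseBracket y := by
    gcongr <;> exact norm_le_japaneseBracket _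
  refine Real.sqrt_le_iff.2 ⟨by positivity, ?_⟩
  calc 1 + ‖x + y‖ ^ 2 ≤ 1 + (‖x‖ + ‖y‖) ^ 2 := by gcongr; exact norm_add_le x y
    _ ≤ (japaneseBracket x + japaneseBracket y) ^ 2 := by
        nlinarith [sq_japaneseBracket x, sq_japaneseBracket y]

lemma continuous_japaneseBracket : Continuous (japaneseBracket : V → ℝ) := by
  unfold japaneseBracket; fun_prop

lemma integrable_japaneseBracket_rpow [NormedSpace ℝ V] [FiniteDimensional ℝ V]
    [MeasurableSpace V] [BorelSpace V] (μ : Measure V) [μ.IsAddHaarMeasure] {r : ℝ}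
    (hr : r < -Module.finrank ℝ V) : Integrable (fun x : V => japaneseBracket x ^ r) μ := by
  refine (integrable_rpow_neg_one_add_norm_sq (μ := μ) (r := -r) (by linarith)).congr
    (.of_forall fun x => ?_)
  simp only [japaneseBracket, Real.sqrt_eq_rpow, neg_neg]
  rw [← Real.rpow_mul (by positivity), one_div_mul_eq_div]

lemma japaneseBracket_real (η : ℝ) : japaneseBracket η = √(1 + η ^ 2) := by
  simp [japaneseBracket]

lemma japaneseBracket_toLp (ξ η : ℝ) :
    japaneseBracket (WithLp.toLp 2 (ξ, η)) = √(1 + ξ ^ 2 + η ^ 2) := by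
  simp [japaneseBracket, WithLp.prod_norm_sq_eq_of_L2, add_assoc]

end JapaneseBracket

lemma rpow_mul_rpow_le_of_le_add {r s t u : ℝ} (hr : r ≤ 0) (hs : 0 < s) (ht : 0 < t)
    (hu : 0 < u) (hust : u ≤ s + t) : s ^ r * t ^ r ≤ 2 ^ (-r) * u ^ r * (s ^ r + t ^ r) := by
  wlog hst : s ≤ t generalizing s t
  · simpa only [mul_comm (s ^ r), add_comm (s ^ r)] using
      this ht hs (by linarith) (le_of_not_ge hst)
  have hmax : t ^ r ≤ 2 ^ (-r) * u ^ r := calc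
    t ^ r ≤ (u / 2) ^ r := Real.rpow_le_rpow_of_nonpos (by positivity) (by linarith) hr
    _ = 2 ^ (-r) * u ^ r := by
      rw [Real.div_rpow hu.le two_pos.le, Real.rpow_neg two_pos.le, div_eq_inv_mul]
  calc s ^ r * t ^ r ≤ s ^ r * (2 ^ (-r) * u ^ r) := by gcongr
    _ = 2 ^ (-r) * u ^ r * s ^ r := mul_comm _ _
    _ ≤ 2 ^ (-r) * u ^ r * (s ^ r + t ^ r) := by
      gcongr; exact le_add_of_nonneg_right (by positivity)

section Weight

/-- The weight `⟨ξ;η⟩^p ⟨η⟩^q`. The bracket `⟨ξ;η⟩` is the Japanese bracket for the Euclidean norm,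
which `ℝ × ℝ` carries only as `WithLp 2 (ℝ × ℝ)`. -/
def symbolWeight (p q : ℝ) (t : ℝ × ℝ) : ℝ :=
  japaneseBracket (WithLp.toLp 2 t) ^ p * japaneseBracket t.2 ^ q

variable {p q p' q' : ℝ}

lemma symbolWeight_pos (p q : ℝ) (t : ℝ × ℝ) : 0 < symbolWeight p q t :=
  mul_pos (Real.rpow_pos_of_pos (japaneseBracket_pos _) p)
    (Real.rpow_pos_of_pos (japaneseBracket_pos _) q)

lemma symbolWeight_zero (t : ℝ × ℝ) : symbolWeight 0 0 t = 1 := by simp [symbolWeight]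

lemma continuous_symbolWeight (p q : ℝ) : Continuous (symbolWeight p q) := by
  refine .mul (.rpow_const ?_ fun t => .inl (japaneseBracket_pos _).ne')
    (.rpow_const ?_ fun t => .inl (japaneseBracket_pos _).ne')
  · exact continuous_japaneseBracket.comp (WithLp.prod_continuous_toLp 2 ℝ ℝ)
  · exact continuous_japaneseBracket.comp continuous_snd

lemma symbolWeight_mul_symbolWeight (t : ℝ × ℝ) :
    symbolWeight p q t * symbolWeight p' q' t = symbolWeight (p + p') (q + q') t := by
  simp only [symbolWeight, Real.rpow_add (japaneseBracket_pos _)]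
  ring

lemma japaneseBracket_fst_le_toLp (t : ℝ × ℝ) :
    japaneseBracket t.1 ≤ japaneseBracket (WithLp.toLp 2 t) :=
  japaneseBracket_le_japaneseBracket (WithLp.norm_fst_le ℝ (WithLp.toLp 2 t))

lemma japaneseBracket_snd_le_toLp (t : ℝ × ℝ) :
    japaneseBracket t.2 ≤ japaneseBracket (WithLp.toLp 2 t) :=
  japaneseBracket_le_japaneseBracket (WithLp.norm_snd_le ℝ (WithLp.toLp 2 t))

lemma norm_le_japaneseBracket_toLp (t : ℝ × ℝ) : ‖t‖ ≤ japaneseBracket (WithLp.toLp 2 t) :=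
  max_le ((norm_le_japaneseBracket t.1).trans (japaneseBracket_fst_le_toLp t))
    ((norm_le_japaneseBracket t.2).trans (japaneseBracket_snd_le_toLp t))

-- Since `⟨η⟩ ≤ ⟨ξ;η⟩`, decay in `⟨ξ;η⟩` can be traded for decay in `⟨η⟩`, but not conversely.
lemma symbolWeight_mono (hp : p ≤ p') (hpq : p + q ≤ p' + q') (t : ℝ × ℝ) :
    symbolWeight p q t ≤ symbolWeight p' q' t := by
  have hη := japaneseBracket_pos t.2
  have hξη := japaneseBracket_pos (WithLp.toLp 2 t)
  set X := japaneseBracket (WithLp.toLp 2 t)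
  set Y := japaneseBracket t.2
  have htrade : X ^ (p - p') ≤ Y ^ (p - p') :=
    Real.rpow_le_rpow_of_nonpos hη (japaneseBracket_snd_le_toLp t) (by linarith)
  calc X ^ p * Y ^ q = X ^ p' * (X ^ (p - p') * Y ^ q) := by
        rw [← mul_assoc, ← Real.rpow_add hξη, add_sub_cancel]
    _ ≤ X ^ p' * (Y ^ (p - p') * Y ^ q) := by gcongr
    _ = X ^ p' * Y ^ (p - p' + q) := by rw [Real.rpow_add hη]
    _ ≤ X ^ p' * Y ^ q' := by
        gcongr
        · exact one_le_japaneseBracket _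
        · linarith

lemma symbolWeight_le_mul (hp : p ≤ 0) (t : ℝ × ℝ) :
    symbolWeight p q t ≤ japaneseBracket t.1 ^ p * japaneseBracket t.2 ^ q :=
  mul_le_mul_of_nonneg_right
    (Real.rpow_le_rpow_of_nonpos (japaneseBracket_pos _) (japaneseBracket_fst_le_toLp t) hp)
    (Real.rpow_nonneg (japaneseBracket_pos _).le _)

lemma integrable_real_japaneseBracket_rpow (hp : p < -1) :
    Integrable (fun x : ℝ => japaneseBracket x ^ p) :=
  integrable_japaneseBracket_rpow volume (by simpa using hp)

lemma integrable_symbolWeight (hp : p < -1) (hq : q < -1) : Integrable (symbolWeight p q) := by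
  refine ((integrable_real_japaneseBracket_rpow hp).mul_prod
    (integrable_real_japaneseBracket_rpow hq)).mono'
    (continuous_symbolWeight p q).aestronglyMeasurable (.of_forall fun t => ?_)
  rw [Real.norm_of_nonneg (symbolWeight_pos p q t).le]
  exact symbolWeight_le_mul (by linarith) t

lemma integrable_symbolWeight_sub_mul (hp : p < -1) (hq : q < -1) (x : ℝ × ℝ) :
    Integrable fun t => symbolWeight p q (x - t) * symbolWeight p q t := by
  refine (integrable_symbolWeight hp hq).bdd_mul (c := 1) ?_ (.of_forall fun t => ?_)
  · exact ((continuous_symbolWeight p q).comp (by fun_prop)).aestronglyMeasurable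
  · rw [Real.norm_of_nonneg (symbolWeight_pos _ _ _).le, ← symbolWeight_zero (x - t)]
    exact symbolWeight_mono (by linarith) (by linarith) _

lemma symbolWeight_sub_mul_symbolWeight_le (hp : p ≤ 0) (hq : q ≤ 0) (x t : ℝ × ℝ) :
    symbolWeight p q (x - t) * symbolWeight p q t ≤
      2 ^ (-p) * 2 ^ (-q) * symbolWeight p q x *
        ((japaneseBracket (x.1 - t.1) ^ p + japaneseBracket t.1 ^ p) *
          (japaneseBracket (x.2 - t.2) ^ q + japaneseBracket t.2 ^ q)) := by
  have hξη := rpow_mul_rpow_le_of_le_add hp (japaneseBracket_pos (WithLp.toLp 2 (x - t)))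
    (japaneseBracket_pos (WithLp.toLp 2 t)) (japaneseBracket_pos (WithLp.toLp 2 x))
    (by simpa using japaneseBracket_add_le (WithLp.toLp 2 (x - t)) (WithLp.toLp 2 t))
  have hη := rpow_mul_rpow_le_of_le_add hq (japaneseBracket_pos (x.2 - t.2))
    (japaneseBracket_pos t.2) (japaneseBracket_pos x.2)
    (by simpa using japaneseBracket_add_le (x.2 - t.2) t.2)
  have hfst (s : ℝ × ℝ) : japaneseBracket (WithLp.toLp 2 s) ^ p ≤ japaneseBracket s.1 ^ p :=
    Real.rpow_le_rpow_of_nonpos (japaneseBracket_pos _) (japaneseBracket_fst_le_toLp s) hp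
  have hpos {W : Type} [NormedAddCommGroup W] (w : W) (r : ℝ) : 0 ≤ japaneseBracket w ^ r :=
    Real.rpow_nonneg (japaneseBracket_pos w).le r
  calc symbolWeight p q (x - t) * symbolWeight p q t
      = (japaneseBracket (WithLp.toLp 2 (x - t)) ^ p * japaneseBracket (WithLp.toLp 2 t) ^ p) *
          (japaneseBracket (x.2 - t.2) ^ q * japaneseBracket t.2 ^ q) := by
        simp only [symbolWeight, Prod.snd_sub]; ring
    _ ≤ (2 ^ (-p) * japaneseBracket (WithLp.toLp 2 x) ^ p *
            (japaneseBracket (x.1 - t.1) ^ p + japaneseBracket t.1 ^ p)) *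
          (2 ^ (-q) * japaneseBracket x.2 ^ q *
            (japaneseBracket (x.2 - t.2) ^ q + japaneseBracket t.2 ^ q)) := by
        refine mul_le_mul (hξη.trans ?_) hη (mul_nonneg (hpos _ _) (hpos _ _)) ?_
        · exact mul_le_mul_of_nonneg_left (add_le_add (hfst (x - t)) (hfst t))
            (mul_nonneg (by positivity) (hpos _ _))
        · exact mul_nonneg (mul_nonneg (by positivity) (hpos _ _))
            (add_nonneg (hpos _ _) (hpos _ _))
    _ = _ := by simp only [symbolWeight]; ring

lemma exists_integral_symbolWeight_sub_mul_le (hp : p < -1) (hq : q < -1) :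
    ∃ C, ∀ x, ∫ t, symbolWeight p q (x - t) * symbolWeight p q t ≤ C * symbolWeight p q x := by
  have hsum {r : ℝ} (hr : r < -1) (s : ℝ) : Integrable
      (fun t : ℝ => japaneseBracket (s - t) ^ r + japaneseBracket t ^ r) :=
    ((integrable_real_japaneseBracket_rpow hr).comp_sub_left s).add
      (integrable_real_japaneseBracket_rpow hr)
  have hmass {r : ℝ} (hr : r < -1) (s : ℝ) :
      ∫ t : ℝ, (japaneseBracket (s - t) ^ r + japaneseBracket t ^ r) =
        2 * ∫ t : ℝ, japaneseBracket t ^ r := by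
    rw [integral_add ((integrable_real_japaneseBracket_rpow hr).comp_sub_left s)
      (integrable_real_japaneseBracket_rpow hr),
      integral_sub_left_eq_self (fun t : ℝ => japaneseBracket t ^ r) volume s, two_mul]
  refine ⟨2 ^ (-p) * 2 ^ (-q) *
    ((2 * ∫ t : ℝ, japaneseBracket t ^ p) * (2 * ∫ t : ℝ, japaneseBracket t ^ q)), fun x => ?_⟩
  calc ∫ t, symbolWeight p q (x - t) * symbolWeight p q t
      ≤ ∫ t : ℝ × ℝ, 2 ^ (-p) * 2 ^ (-q) * symbolWeight p q x *
          ((japaneseBracket (x.1 - t.1) ^ p + japaneseBracket t.1 ^ p) *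
            (japaneseBracket (x.2 - t.2) ^ q + japaneseBracket t.2 ^ q)) :=
        integral_mono_of_nonneg
          (.of_forall fun t => (mul_pos (symbolWeight_pos _ _ _) (symbolWeight_pos _ _ _)).le)
          (((hsum hp x.1).mul_prod (hsum hq x.2)).const_mul _)
          (.of_forall fun t => symbolWeight_sub_mul_symbolWeight_le (by linarith) (by linarith) x t)
    _ = _ := by
        rw [integral_const_mul, Measure.volume_eq_prod,
          integral_prod_mul (fun t : ℝ => japaneseBracket (x.1 - t) ^ p + japaneseBracket t ^ p)
            (fun t : ℝ => japaneseBracket (x.2 - t) ^ q + japaneseBracket t ^ q), hmass hp,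
          hmass hq]
        ring

end Weight

section SymbolOrder

variable {E F : Type*} [NormedAddCommGroup E] [NormedAddCommGroup F] {p q p' q' : ℝ}

/-- The symbol estimate `‖f(z,ξ,η)‖ ≤ C ⟨ξ;η⟩^p ⟨η⟩^q`, with `C` uniform for `z` in compact sets.
The fibre variables are `(ξ, η) = x.2`. -/
def HasSymbolOrder (p q : ℝ) (f : E × ℝ × ℝ → F) : Prop :=
  ∀ K : Set E, IsCompact K → f =O[𝓟 (K ×ˢ univ)] fun x => symbolWeight p q x.2

lemma hasSymbolOrder_iff {f : E × ℝ × ℝ → F} :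
    HasSymbolOrder p q f ↔ ∀ K : Set E, IsCompact K →
      ∃ C, ∀ z ∈ K, ∀ t : ℝ × ℝ, ‖f (z, t)‖ ≤ C * symbolWeight p q t := by
  simp only [HasSymbolOrder, isBigO_principal, Real.norm_of_nonneg (symbolWeight_pos _ _ _).le,
    Prod.forall (α := E), mem_prod, mem_univ, and_true]
  exact forall₂_congr fun K _ => exists_congr fun C => forall_congr' fun z => forall_comm

lemma hasSymbolOrder_const (c : F) : HasSymbolOrder 0 0 (fun _ : E × ℝ × ℝ => c) := fun K _ => by
  simpa only [symbolWeight_zero] using isBigO_const_const c one_ne_zero _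

namespace HasSymbolOrder

lemma mono {f : E × ℝ × ℝ → F} (hf : HasSymbolOrder p q f) (hp : p ≤ p')
    (hpq : p + q ≤ p' + q') : HasSymbolOrder p' q' f := fun K hK =>
  (hf K hK).trans <| .of_bound 1 <| .of_forall fun x => by
    simpa [Real.norm_of_nonneg (symbolWeight_pos _ _ _).le] using symbolWeight_mono hp hpq x.2

lemma add {f g : E × ℝ × ℝ → F} (hf : HasSymbolOrder p q f) (hg : HasSymbolOrder p q g) :
    HasSymbolOrder p q (f + g) := fun K hK => (hf K hK).add (hg K hK)

lemma mul {f g : E × ℝ × ℝ → ℂ} (hf : HasSymbolOrder p q f) (hg : HasSymbolOrder p' q' g) :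
    HasSymbolOrder (p + p') (q + q') (f * g) := fun K hK => by
  simpa only [symbolWeight_mul_symbolWeight] using! (hf K hK).mul (hg K hK)

end HasSymbolOrder

lemma hasSymbolOrder_fderiv [NormedSpace ℝ E] [FiniteDimensional ℝ E] [NormedSpace ℝ F]
    {f : E × ℝ × ℝ → F} (hf : ∀ v, HasSymbolOrder p q (fderivAlong v f)) :
    HasSymbolOrder p q (fderiv ℝ f) := by
  intro K hK
  let basis := Module.finBasis ℝ (E × ℝ × ℝ)
  obtain ⟨C, -, hC⟩ := basis.exists_opNorm_le (F := F)
  have hsum : (fun x => ∑ i, ‖fderivAlong (basis i) f x‖) =O[𝓟 (K ×ˢ univ)]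
      fun x => symbolWeight p q x.2 := .fun_sum fun i _ => (hf (basis i) K hK).norm_left
  refine .trans (.of_bound C (.of_forall fun x => ?_)) hsum
  rw [Real.norm_of_nonneg (by positivity)]
  exact hC (by positivity) fun i =>
    Finset.single_le_sum (f := fun i => ‖fderivAlong (basis i) f x‖) (by simp) (Finset.mem_univ i)

lemma hasSymbolOrder_inv {f : E × ℝ × ℝ → ℂ} (hf : ∀ x, symbolWeight p q x.2 ≤ ‖f x‖) :
    HasSymbolOrder (-p) (-q) f⁻¹ := fun K _ => .of_bound 1 <| .of_forall fun x => by
  have hweight : symbolWeight (-p) (-q) x.2 = (symbolWeight p q x.2)⁻¹ :=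
    eq_inv_of_mul_eq_one_left (by simp [symbolWeight_mul_symbolWeight, symbolWeight_zero])
  rw [hweight, one_mul, norm_inv, Pi.inv_apply, norm_inv,
    Real.norm_of_nonneg (symbolWeight_pos p q x.2).le]
  exact inv_anti₀ (symbolWeight_pos p q x.2) (hf x)

end SymbolOrder

section SymbolUpTo

variable {E : Type*} [NormedAddCommGroup E] [NormedSpace ℝ E] {n : ℕ} {p q p' q' : ℝ}
  {f g : E × ℝ × ℝ → ℂ}

/-- The estimates of the product-type symbol class `S^{p,q}(E × ℝ × ℝ)` for derivatives of order at
most `n`, defined by recursion on `n`: each `∂_ξ` lowers `p` and each `∂_η` lowers `q`. -/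
def IsSymbolUpTo : ℕ → ℝ → ℝ → (E × ℝ × ℝ → ℂ) → Prop
  | 0, p, q, f => ContDiff ℝ ∞ f ∧ HasSymbolOrder p q f
  | n + 1, p, q, f => IsSymbolUpTo n p q f ∧ (∀ v : E, IsSymbolUpTo n p q (fderivAlong (v, 0) f)) ∧
      IsSymbolUpTo n (p - 1) q (fderivAlong (0, 1, 0) f) ∧
      IsSymbolUpTo n p (q - 1) (fderivAlong (0, 0, 1) f)

lemma isSymbolUpTo_zero (n : ℕ) (p q : ℝ) : IsSymbolUpTo n p q (0 : E × ℝ × ℝ → ℂ) := by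
  induction n generalizing p q with
  | zero => exact ⟨contDiff_const, fun _ _ => isBigO_zero _ _⟩
  | succ n ih =>
    have hzero (v : E × ℝ × ℝ) : fderivAlong v (0 : E × ℝ × ℝ → ℂ) = 0 := fderivAlong_const v 0
    simp only [IsSymbolUpTo, hzero]
    exact ⟨ih p q, fun _ => ih p q, ih (p - 1) q, ih p (q - 1)⟩

lemma isSymbolUpTo_const (n : ℕ) (c : ℂ) : IsSymbolUpTo n 0 0 (fun _ : E × ℝ × ℝ => c) := by
  induction n with
  | zero => exact ⟨contDiff_const, hasSymbolOrder_const c⟩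
  | succ n ih =>
    simp only [IsSymbolUpTo, fderivAlong_const]
    exact ⟨ih, fun _ => isSymbolUpTo_zero .., isSymbolUpTo_zero .., isSymbolUpTo_zero ..⟩

namespace IsSymbolUpTo

lemma contDiff (hf : IsSymbolUpTo n p q f) : ContDiff ℝ ∞ f := by
  induction n with
  | zero => exact hf.1
  | succ n ih => exact ih hf.1

lemma differentiable (hf : IsSymbolUpTo n p q f) : Differentiable ℝ f :=
  hf.contDiff.differentiable (by simp)

lemma hasSymbolOrder (hf : IsSymbolUpTo n p q f) : HasSymbolOrder p q f := by
  induction n with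
  | zero => exact hf.2
  | succ n ih => exact ih hf.1

lemma mono (hf : IsSymbolUpTo n p q f) (hp : p ≤ p') (hpq : p + q ≤ p' + q') :
    IsSymbolUpTo n p' q' f := by
  induction n generalizing p q p' q' f with
  | zero => exact ⟨hf.1, hf.2.mono hp hpq⟩
  | succ n ih =>
    exact ⟨ih hf.1 hp hpq, fun v => ih (hf.2.1 v) hp hpq,
      ih hf.2.2.1 (by linarith) (by linarith), ih hf.2.2.2 hp (by linarith)⟩

lemma add (hf : IsSymbolUpTo n p q f) (hg : IsSymbolUpTo n p q g) :
    IsSymbolUpTo n p q (f + g) := by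
  induction n generalizing p q f g with
  | zero => exact ⟨hf.1.add hg.1, hf.2.add hg.2⟩
  | succ n ih =>
    simp only [IsSymbolUpTo, fderivAlong_add hf.differentiable hg.differentiable]
    exact ⟨ih hf.1 hg.1, fun v => ih (hf.2.1 v) (hg.2.1 v), ih hf.2.2.1 hg.2.2.1,
      ih hf.2.2.2 hg.2.2.2⟩

lemma sum {ι : Type*} {s : Finset ι} {f : ι → E × ℝ × ℝ → ℂ}
    (hf : ∀ i ∈ s, IsSymbolUpTo n p q (f i)) : IsSymbolUpTo n p q (∑ i ∈ s, f i) :=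
  Finset.sum_induction _ _ (fun _ _ => .add) (isSymbolUpTo_zero n p q) hf

lemma mul (hf : IsSymbolUpTo n p q f) (hg : IsSymbolUpTo n p' q' g) :
    IsSymbolUpTo n (p + p') (q + q') (f * g) := by
  induction n generalizing p q p' q' f g with
  | zero => exact ⟨hf.1.mul hg.1, hf.2.mul hg.2⟩
  | succ n ih =>
    simp only [IsSymbolUpTo, fderivAlong_mul hf.differentiable hg.differentiable]
    refine ⟨ih hf.1 hg.1, fun v => (ih (hf.2.1 v) hg.1).add (ih hf.1 (hg.2.1 v)), ?_, ?_⟩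
    · exact ((ih hf.2.2.1 hg.1).mono (by linarith) (by linarith)).add
        ((ih hf.1 hg.2.2.1).mono (by linarith) (by linarith))
    · exact ((ih hf.2.2.2 hg.1).mono le_rfl (by linarith)).add
        ((ih hf.1 hg.2.2.2).mono le_rfl (by linarith))

lemma const_smul (hf : IsSymbolUpTo n p q f) (c : ℝ) : IsSymbolUpTo n p q (c • f) := by
  have hmul : (fun _ => (c : ℂ)) * f = c • f := by ext; simp
  simpa [hmul] using (isSymbolUpTo_const n (c : ℂ)).mul hf

lemma inv (hg : IsSymbolUpTo n p q g) (hlower : ∀ x, symbolWeight p q x.2 ≤ ‖g x‖) :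
    IsSymbolUpTo n (-p) (-q) g⁻¹ := by
  have hg0 (x : E × ℝ × ℝ) : g x ≠ 0 :=
    norm_pos_iff.1 ((symbolWeight_pos _ _ _).trans_le (hlower x))
  induction n with
  | zero => exact ⟨hg.1.inv hg0, hasSymbolOrder_inv hlower⟩
  | succ n ih =>
    have hinv := ih hg.1
    have hderiv {p' q' : ℝ} {Dg : E × ℝ × ℝ → ℂ} (hDg : IsSymbolUpTo n p' q' Dg) :
        IsSymbolUpTo n (p' - p - p) (q' - q - q) ((fun _ => -1) * (g⁻¹ * g⁻¹ * Dg)) :=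
      ((isSymbolUpTo_const n (-1)).mul ((hinv.mul hinv).mul hDg)).mono (by linarith) (by linarith)
    simp only [IsSymbolUpTo, fderivAlong_inv hg.differentiable hg0]
    exact ⟨hinv, fun v => (hderiv (hg.2.1 v)).mono (by linarith) (by linarith),
      (hderiv hg.2.2.1).mono (by linarith) (by linarith),
      (hderiv hg.2.2.2).mono (by linarith) (by linarith)⟩

lemma of_mul_of_le_norm (hg : IsSymbolUpTo n p q g) (hlower : ∀ x, symbolWeight p q x.2 ≤ ‖g x‖)
    (hgf : IsSymbolUpTo n p' q' (g * f)) : IsSymbolUpTo n (p' - p) (q' - q) f := by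
  have hg0 (x : E × ℝ × ℝ) : g x ≠ 0 :=
    norm_pos_iff.1 ((symbolWeight_pos _ _ _).trans_le (hlower x))
  have hcancel : g⁻¹ * (g * f) = f := by ext x; simp [hg0 x]
  simpa [hcancel, neg_add_eq_sub] using (hg.inv hlower).mul hgf

end IsSymbolUpTo

end SymbolUpTo

section FiberCoord

variable {E : Type*} [NormedAddCommGroup E] [NormedSpace ℝ E] {n : ℕ} {p q : ℝ}
  {f : E × ℝ × ℝ → ℂ}

/-- A linear functional of the fibre variables `(ξ, η)`, as a complex-valued function on the total
space: `fiberCoord (.fst ℝ ℝ ℝ)` is `ξ` and `fiberCoord (.snd ℝ ℝ ℝ)` is `η`. -/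
def fiberCoord (l : ℝ × ℝ →L[ℝ] ℝ) (x : E × ℝ × ℝ) : ℂ := l x.2

lemma hasFDerivAt_fiberCoord (l : ℝ × ℝ →L[ℝ] ℝ) (x : E × ℝ × ℝ) :
    HasFDerivAt (fiberCoord l)
      (Complex.ofRealCLM ∘L l ∘L ContinuousLinearMap.snd ℝ E (ℝ × ℝ)) x :=
  (Complex.ofRealCLM ∘L l ∘L ContinuousLinearMap.snd ℝ E (ℝ × ℝ)).hasFDerivAt

lemma contDiff_fiberCoord (l : ℝ × ℝ →L[ℝ] ℝ) :
    ContDiff ℝ ∞ (fiberCoord l : E × ℝ × ℝ → ℂ) :=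
  (Complex.ofRealCLM ∘L l ∘L ContinuousLinearMap.snd ℝ E (ℝ × ℝ)).contDiff

lemma fderivAlong_fiberCoord (l : ℝ × ℝ →L[ℝ] ℝ) (v : E × ℝ × ℝ) :
    fderivAlong v (fiberCoord l) = fun _ => (l v.2 : ℂ) := by
  ext x
  rw [fderivAlong_apply, (hasFDerivAt_fiberCoord l x).fderiv]
  rfl

lemma isSymbolUpTo_fiberCoord (n : ℕ) (l : ℝ × ℝ →L[ℝ] ℝ) :
    IsSymbolUpTo n 1 0 (fiberCoord l : E × ℝ × ℝ → ℂ) := by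
  induction n with
  | zero =>
    refine ⟨contDiff_fiberCoord l, hasSymbolOrder_iff.2 fun K _ => ⟨‖l‖, fun z _ t => ?_⟩⟩
    calc ‖fiberCoord l (z, t)‖ ≤ ‖l‖ * ‖t‖ := by simpa [fiberCoord] using! l.le_opNorm t
      _ ≤ ‖l‖ * symbolWeight 1 0 t := by
        gcongr
        simpa [symbolWeight] using norm_le_japaneseBracket_toLp t
  | succ n ih =>
    simp only [IsSymbolUpTo, fderivAlong_fiberCoord]
    exact ⟨ih, fun _ => (isSymbolUpTo_const n _).mono (by simp) (by simp),
      (isSymbolUpTo_const n _).mono (by simp) (by simp),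
      (isSymbolUpTo_const n _).mono (by simp) (by simp)⟩

lemma isSymbolUpTo_fiberCoord_snd (n : ℕ) :
    IsSymbolUpTo n 0 1 (fiberCoord (.snd ℝ ℝ ℝ) : E × ℝ × ℝ → ℂ) := by
  induction n with
  | zero =>
    refine ⟨contDiff_fiberCoord _, hasSymbolOrder_iff.2 fun K _ => ⟨1, fun z _ t => ?_⟩⟩
    simpa [symbolWeight, fiberCoord] using norm_le_japaneseBracket t.2
  | succ n ih =>
    simp only [IsSymbolUpTo, fderivAlong_fiberCoord]
    refine ⟨ih, fun _ => (isSymbolUpTo_const n _).mono (by simp) (by simp), ?_,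
      (isSymbolUpTo_const n _).mono (by simp) (by simp)⟩
    simpa using! isSymbolUpTo_zero n _ _

namespace IsSymbolUpTo

lemma of_fiberCoord_mul (hf : IsSymbolUpTo n p q f)
    (hξ : IsSymbolUpTo n p q (fiberCoord (.fst ℝ ℝ ℝ) * f))
    (hη : IsSymbolUpTo n p q (fiberCoord (.snd ℝ ℝ ℝ) * f)) : IsSymbolUpTo n (p - 1) q f := by
  set ξ : E × ℝ × ℝ → ℂ := fiberCoord (.fst ℝ ℝ ℝ)
  set η : E × ℝ × ℝ → ℂ := fiberCoord (.snd ℝ ℝ ℝ)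
  have hξsymbol : IsSymbolUpTo n 1 0 ξ := isSymbolUpTo_fiberCoord n _
  have hηsymbol : IsSymbolUpTo n 1 0 η := isSymbolUpTo_fiberCoord n _
  have hone : IsSymbolUpTo n 0 0 (1 : E × ℝ × ℝ → ℂ) := isSymbolUpTo_const n 1
  have hbracket : IsSymbolUpTo n 2 0 (1 + ξ * ξ + η * η) :=
    ((hone.mono (by norm_num) (by norm_num)).add
      ((hξsymbol.mul hξsymbol).mono (by norm_num) (by norm_num))).add
      ((hηsymbol.mul hηsymbol).mono (by norm_num) (by norm_num))
  have hlower (x : E × ℝ × ℝ) : symbolWeight 2 0 x.2 ≤ ‖(1 + ξ * ξ + η * η) x‖ := calc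
    symbolWeight 2 0 x.2 = 1 + x.2.1 * x.2.1 + x.2.2 * x.2.2 := by
      simp [symbolWeight, sq_japaneseBracket, WithLp.prod_norm_sq_eq_of_L2, ← sq, add_assoc]
    _ ≤ ‖((1 + x.2.1 * x.2.1 + x.2.2 * x.2.2 : ℝ) : ℂ)‖ :=
      (le_abs_self _).trans_eq (Complex.norm_real _).symm
    _ = ‖(1 + ξ * ξ + η * η) x‖ := by push_cast; rfl
  have hmul : (1 + ξ * ξ + η * η) * f = f + ξ * (ξ * f) + η * (η * f) := by ring
  have hexpand : IsSymbolUpTo n (p + 1) q ((1 + ξ * ξ + η * η) * f) := by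
    rw [hmul]
    exact ((hf.mono (by linarith) (by linarith)).add
      ((hξsymbol.mul hξ).mono (by linarith) (by linarith))).add
      ((hηsymbol.mul hη).mono (by linarith) (by linarith))
  exact (hbracket.of_mul_of_le_norm hlower hexpand).mono (by linarith) (by linarith)

lemma of_fiberCoord_snd_mul (hf : IsSymbolUpTo n p q f)
    (hη : IsSymbolUpTo n p q (fiberCoord (.snd ℝ ℝ ℝ) * f)) : IsSymbolUpTo n p (q - 1) f := by
  set η : E × ℝ × ℝ → ℂ := fiberCoord (.snd ℝ ℝ ℝ)
  have hηsymbol : IsSymbolUpTo n 0 1 η := isSymbolUpTo_fiberCoord_snd n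
  have hone : IsSymbolUpTo n 0 0 (1 : E × ℝ × ℝ → ℂ) := isSymbolUpTo_const n 1
  have hbracket : IsSymbolUpTo n 0 2 (1 + η * η) :=
    (hone.mono (by norm_num) (by norm_num)).add
      ((hηsymbol.mul hηsymbol).mono (by norm_num) (by norm_num))
  have hlower (x : E × ℝ × ℝ) : symbolWeight 0 2 x.2 ≤ ‖(1 + η * η) x‖ := calc
    symbolWeight 0 2 x.2 = 1 + x.2.2 * x.2.2 := by simp [symbolWeight, sq_japaneseBracket, ← sq]
    _ ≤ ‖((1 + x.2.2 * x.2.2 : ℝ) : ℂ)‖ := (le_abs_self _).trans_eq (Complex.norm_real _).symm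
    _ = ‖(1 + η * η) x‖ := by push_cast; rfl
  have hmul : (1 + η * η) * f = f + η * (η * f) := by ring
  have hexpand : IsSymbolUpTo n p (q + 1) ((1 + η * η) * f) := by
    rw [hmul]
    exact (hf.mono (by linarith) (by linarith)).add
      ((hηsymbol.mul hη).mono (by linarith) (by linarith))
  exact (hbracket.of_mul_of_le_norm hlower hexpand).mono (by linarith) (by linarith)

end IsSymbolUpTo

end FiberCoord

section ProductSymbol

variable {E : Type*} [NormedAddCommGroup E] [NormedSpace ℝ E] {p q p' q' : ℝ}
  {f g : E × ℝ × ℝ → ℂ}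

/-- The product-type symbol class `S^{p,q}(E × ℝ × ℝ)`: smooth functions satisfying the symbol
estimates for derivatives of all orders. -/
def IsProductSymbol (p q : ℝ) (f : E × ℝ × ℝ → ℂ) : Prop := ∀ n, IsSymbolUpTo n p q f

lemma isProductSymbol_fiberCoord (l : ℝ × ℝ →L[ℝ] ℝ) :
    IsProductSymbol 1 0 (fiberCoord l : E × ℝ × ℝ → ℂ) := fun n => isSymbolUpTo_fiberCoord n l

lemma isProductSymbol_fiberCoord_snd :
    IsProductSymbol 0 1 (fiberCoord (.snd ℝ ℝ ℝ) : E × ℝ × ℝ → ℂ) := isSymbolUpTo_fiberCoord_snd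

namespace IsProductSymbol

lemma contDiff (hf : IsProductSymbol p q f) : ContDiff ℝ ∞ f := (hf 0).contDiff

lemma continuous (hf : IsProductSymbol p q f) : Continuous f := hf.contDiff.continuous

lemma differentiable (hf : IsProductSymbol p q f) : Differentiable ℝ f := (hf 0).differentiable

lemma hasSymbolOrder (hf : IsProductSymbol p q f) : HasSymbolOrder p q f := (hf 0).hasSymbolOrder

lemma mono (hf : IsProductSymbol p q f) (hp : p ≤ p') (hpq : p + q ≤ p' + q') :
    IsProductSymbol p' q' f := fun n => (hf n).mono hp hpq

lemma mul (hf : IsProductSymbol p q f) (hg : IsProductSymbol p' q' g) :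
    IsProductSymbol (p + p') (q + q') (f * g) := fun n => (hf n).mul (hg n)

lemma fderivAlong_base (hf : IsProductSymbol p q f) (v : E) :
    IsProductSymbol p q (fderivAlong (v, 0) f) := fun n => (hf (n + 1)).2.1 v

lemma fderivAlong_fst (hf : IsProductSymbol p q f) :
    IsProductSymbol (p - 1) q (fderivAlong (0, 1, 0) f) := fun n => (hf (n + 1)).2.2.1

lemma fderivAlong_snd (hf : IsProductSymbol p q f) :
    IsProductSymbol p (q - 1) (fderivAlong (0, 0, 1) f) := fun n => (hf (n + 1)).2.2.2

protected lemma fderivAlong (hf : IsProductSymbol p q f) (v : E × ℝ × ℝ) :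
    IsProductSymbol p q (fderivAlong v f) := fun n => by
  have hv : v = (v.1, 0) + v.2.1 • ((0, 1, 0) : E × ℝ × ℝ) + v.2.2 • ((0, 0, 1) : E × ℝ × ℝ) := by
    ext <;> simp
  rw [hv, fderivAlong_add_left, fderivAlong_add_left, fderivAlong_smul_left, fderivAlong_smul_left]
  exact ((hf.fderivAlong_base v.1 n).add
    (((hf.fderivAlong_fst n).const_smul _).mono (by linarith) (by linarith))).add
    (((hf.fderivAlong_snd n).const_smul _).mono le_rfl (by linarith))

protected lemma hasSymbolOrder_fderiv [FiniteDimensional ℝ E] (hf : IsProductSymbol p q f) :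
    HasSymbolOrder p q (fderiv ℝ f) :=
  hasSymbolOrder_fderiv fun v => (hf.fderivAlong v).hasSymbolOrder

end IsProductSymbol

end ProductSymbol

section MixedDeriv

variable {E : Type*} [NormedAddCommGroup E] [NormedSpace ℝ E] {p q : ℝ} {f : E × ℝ × ℝ → ℂ}

/-- The mixed derivative `∂_L ∂_ξ^α ∂_η^β f`, where `∂_L` differentiates the parameter in each of
the directions of the list `L`. -/
def mixedDeriv (L : List E) (α β : ℕ) (f : E × ℝ × ℝ → ℂ) : E × ℝ × ℝ → ℂ :=
  L.foldr (fun v => fderivAlong (v, 0))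
    ((fderivAlong (0, 1, 0))^[α] ((fderivAlong (0, 0, 1))^[β] f))

lemma mixedDeriv_concat (hf : ContDiff ℝ ∞ f) (L : List E) (v : E) (α β : ℕ) :
    mixedDeriv (L ++ [v]) α β f = mixedDeriv L α β (fderivAlong (v, 0) f) := by
  simp only [mixedDeriv, List.foldr_append, List.foldr_cons, List.foldr_nil]
  rw [iterate_fderivAlong_comm hf, iterate_fderivAlong_comm (contDiff_iterate_fderivAlong hf _ _)]

lemma mixedDeriv_fst (hf : ContDiff ℝ ∞ f) (L : List E) (α β : ℕ) :
    mixedDeriv L α β (fderivAlong (0, 1, 0) f) = mixedDeriv L (α + 1) β f := by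
  simp only [mixedDeriv]
  rw [iterate_fderivAlong_comm hf, Function.iterate_succ_apply]

lemma mixedDeriv_snd (L : List E) (α β : ℕ) (f : E × ℝ × ℝ → ℂ) :
    mixedDeriv L α β (fderivAlong (0, 0, 1) f) = mixedDeriv L α (β + 1) f := rfl

lemma contDiff_mixedDeriv (hf : ContDiff ℝ ∞ f) (L : List E) (α β : ℕ) :
    ContDiff ℝ ∞ (mixedDeriv L α β f) := by
  induction L with
  | nil => exact contDiff_iterate_fderivAlong (contDiff_iterate_fderivAlong hf _ _) _ _
  | cons v L ih => exact contDiff_fderivAlong ih _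

lemma isProductSymbol_mixedDeriv (hf : IsProductSymbol p q f) (L : List E) (α β : ℕ) :
    IsProductSymbol (p - α) (q - β) (mixedDeriv L α β f) := by
  induction L with
  | cons v L ih => exact ih.fderivAlong_base v
  | nil =>
    induction α with
    | succ α ih =>
      have hstep : mixedDeriv [] (α + 1) β f =
          fderivAlong (0, 1, 0) (mixedDeriv [] α β f) :=
        Function.iterate_succ_apply' _ _ _
      rw [hstep]
      exact ih.fderivAlong_fst.mono (by push_cast; linarith) (by push_cast; linarith)
    | zero =>
      induction β with
      | zero => simpa using! hf
      | succ β ih =>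
        have hstep : mixedDeriv [] 0 (β + 1) f =
            fderivAlong (0, 0, 1) (mixedDeriv [] 0 β f) :=
          Function.iterate_succ_apply' _ _ _
        rw [hstep]
        exact ih.fderivAlong_snd.mono le_rfl (by push_cast; linarith)

lemma isSymbolUpTo_of_mixedDeriv {ι : Type*} [Finite ι] (basis : Module.Basis ι ℝ E)
    (hf : ContDiff ℝ ∞ f)
    (hderiv : ∀ (L : List ι) (α β : ℕ),
      HasSymbolOrder (p - α) (q - β) (mixedDeriv (L.map basis) α β f)) (n : ℕ) :
    IsSymbolUpTo n p q f := by
  cases nonempty_fintype ι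
  induction n generalizing p q f with
  | zero => exact ⟨hf, by simpa using! hderiv [] 0 0⟩
  | succ n ih =>
    refine ⟨ih hf hderiv, fun v => ?_, ?_, ?_⟩
    · have hv : (v, (0 : ℝ × ℝ)) = ∑ i, basis.repr v i • (basis i, (0 : ℝ × ℝ)) := by
        ext1
        · simp [Prod.fst_sum, basis.sum_repr]
        · simp [Prod.snd_sum]
      rw [hv, fderivAlong_sum_smul_left]
      refine .sum fun i _ => .const_smul (ih (contDiff_fderivAlong hf _) fun L α β => ?_) _
      rw [← mixedDeriv_concat hf]
      simpa using hderiv (L ++ [i]) α β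
    · refine ih (contDiff_fderivAlong hf _) fun L α β => ?_
      rw [mixedDeriv_fst hf]
      exact (hderiv L (α + 1) β).mono (by push_cast; linarith) (by push_cast; linarith)
    · refine ih (contDiff_fderivAlong hf _) fun L α β => ?_
      rw [mixedDeriv_snd]
      exact (hderiv L α (β + 1)).mono le_rfl (by push_cast; linarith)

end MixedDeriv

section Euclidean

variable {M : ℕ} {m : ℝ} {f : (Fin M → ℝ) × ℝ × ℝ → ℂ}

lemma dirDeriv_comp_prodMk (hf : ContDiff ℝ ∞ f) (i : Fin M) (t : ℝ × ℝ) :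
    dirDeriv i (fun z => f (z, t)) = fun z => fderivAlong (Pi.single i 1, 0) f (z, t) := by
  ext z
  have hline : HasFDerivAt (fun z : Fin M → ℝ => (z, t)) (.inl ℝ (Fin M → ℝ) (ℝ × ℝ)) z :=
    hasFDerivAt_prodMk_left z t
  have hcomp := ((hf.differentiable (by simp) (z, t)).hasFDerivAt.comp z hline).fderiv
  simpa using! DFunLike.congr_fun hcomp (Pi.single i 1)

lemma iteratedDeriv_iteratedDeriv_eq (hf : ContDiff ℝ ∞ f) (α β : ℕ) (z : Fin M → ℝ) (ξ η : ℝ) :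
    iteratedDeriv α (fun ξ => iteratedDeriv β (fun η => f (z, ξ, η)) η) ξ =
      mixedDeriv [] α β f (z, ξ, η) := by
  have hη (ξ : ℝ) : iteratedDeriv β (fun η => f (z, ξ, η)) η =
      (fderivAlong (0, 0, 1))^[β] f (z, ξ, η) := by
    simpa using congr_fun (iteratedDeriv_comp_add_smul hf (z, ξ, 0) (0, 0, 1) β) η
  simp only [hη]
  simpa using! congr_fun (iteratedDeriv_comp_add_smul
    (contDiff_iterate_fderivAlong hf (0, 0, 1) β) (z, 0, η) (0, 1, 0) α) ξ

lemma dirDerivs_iteratedDeriv_eq (hf : ContDiff ℝ ∞ f) (L : List (Fin M)) (α β : ℕ) (ξ η : ℝ) :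
    dirDerivs L (fun z => iteratedDeriv α (fun ξ => iteratedDeriv β (fun η => f (z, ξ, η)) η) ξ) =
      fun z => mixedDeriv (L.map (Pi.basisFun ℝ (Fin M))) α β f (z, ξ, η) := by
  induction L with
  | nil => ext z; exact iteratedDeriv_iteratedDeriv_eq hf α β z ξ η
  | cons i L ih =>
    refine (congrArg (dirDeriv i) ih).trans ?_
    rw [dirDeriv_comp_prodMk (contDiff_mixedDeriv hf _ α β)]
    simp [mixedDeriv]

lemma isProdSymbolOfOrder_iff_mixedDeriv (hf : ContDiff ℝ ∞ f) :
    IsProdSymbolOfOrder m (fun z ξ η => f (z, ξ, η)) ↔ ∀ (L : List (Fin M)) (α β : ℕ),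
      HasSymbolOrder (m - α) (m - β) (mixedDeriv (L.map (Pi.basisFun ℝ (Fin M))) α β f) := by
  simp only [IsProdSymbolOfOrder, dirDerivs_iteratedDeriv_eq hf, hasSymbolOrder_iff, symbolWeight,
    japaneseBracket_toLp, japaneseBracket_real, Prod.forall, mul_assoc]

lemma IsProductSymbol.isProdSymbolOfOrder (hf : IsProductSymbol m m f) :
    IsProdSymbolOfOrder m (fun z ξ η => f (z, ξ, η)) :=
  (isProdSymbolOfOrder_iff_mixedDeriv hf.contDiff).2 fun L α β =>
    (isProductSymbol_mixedDeriv hf (L.map (Pi.basisFun ℝ (Fin M))) α β).hasSymbolOrder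

lemma IsProdSymbolOfOrder.isProductSymbol {a : (Fin M → ℝ) → ℝ → ℝ → ℂ}
    (ha : ContDiff ℝ ∞ fun x : (Fin M → ℝ) × ℝ × ℝ => a x.1 x.2.1 x.2.2)
    (hsa : IsProdSymbolOfOrder m a) : IsProductSymbol m m fun x => a x.1 x.2.1 x.2.2 :=
  isSymbolUpTo_of_mixedDeriv (Pi.basisFun ℝ (Fin M)) ha
    ((isProdSymbolOfOrder_iff_mixedDeriv ha).1 hsa)

end Euclidean

section FiberConv

variable {E : Type*} {p q : ℝ} {a b : E × ℝ × ℝ → ℂ}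

/-- Convolution in the fibre variables: `(a * b)(z, y) = ∫ a(z, y - t) b(z, t) dt`. -/
def fiberConv (a b : E × ℝ × ℝ → ℂ) (x : E × ℝ × ℝ) : ℂ :=
  ∫ t : ℝ × ℝ, a (x.1, x.2 - t) * b (x.1, t)

/-- Every integral defining `fiberConv a b` converges absolutely. -/
def FiberConvExists (a b : E × ℝ × ℝ → ℂ) : Prop :=
  ∀ x : E × ℝ × ℝ, Integrable fun t : ℝ × ℝ => a (x.1, x.2 - t) * b (x.1, t)

lemma FiberConvExists.symm (h : FiberConvExists a b) : FiberConvExists b a := fun x => by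
  simpa [mul_comm] using! (h x).comp_sub_left x.2

lemma fiberConv_zero_right (a : E × ℝ × ℝ → ℂ) : fiberConv a 0 = 0 := by
  ext x; simp [fiberConv]

lemma FiberConvExists.fiberCoord_mul_fiberConv {l : ℝ × ℝ →L[ℝ] ℝ}
    (ha : FiberConvExists (fiberCoord l * a) b) (hb : FiberConvExists a (fiberCoord l * b)) :
    fiberCoord l * fiberConv a b =
      fiberConv (fiberCoord l * a) b + fiberConv a (fiberCoord l * b) := by
  ext x
  simp only [Pi.mul_apply, Pi.add_apply, fiberConv]
  rw [← integral_const_mul]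
  refine .trans ?_ (integral_add (ha x) (hb x))
  congr with t
  simp [fiberCoord]
  ring

variable [NormedAddCommGroup E]

lemma hasSymbolOrder_fiberConv (hp : p < -1) (hq : q < -1) (ha : HasSymbolOrder p q a)
    (hb : HasSymbolOrder p q b) : HasSymbolOrder p q (fiberConv a b) := by
  refine hasSymbolOrder_iff.2 fun K hK => ?_
  obtain ⟨A, hA⟩ := hasSymbolOrder_iff.1 ha K hK
  obtain ⟨B, hB⟩ := hasSymbolOrder_iff.1 hb K hK
  obtain ⟨C, hC⟩ := exists_integral_symbolWeight_sub_mul_le hp hq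
  refine ⟨A * B * C, fun z hz x => ?_⟩
  have hnonneg {f : E × ℝ × ℝ → ℂ} {D : ℝ} (hD : ∀ t, ‖f (z, t)‖ ≤ D * symbolWeight p q t) :
      0 ≤ D :=
    nonneg_of_mul_nonneg_left ((norm_nonneg _).trans (hD 0)) (symbolWeight_pos p q 0)
  have hAB : 0 ≤ A * B := mul_nonneg (hnonneg (hA z hz)) (hnonneg (hB z hz))
  calc ‖fiberConv a b (z, x)‖
      ≤ ∫ t, A * B * (symbolWeight p q (x - t) * symbolWeight p q t) := by
        refine norm_integral_le_of_norm_le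
          ((integrable_symbolWeight_sub_mul hp hq x).const_mul _) (.of_forall fun t => ?_)
        rw [norm_mul, mul_mul_mul_comm]
        exact mul_le_mul (hA z hz _) (hB z hz t) (norm_nonneg _)
          ((norm_nonneg _).trans (hA z hz _))
    _ ≤ A * B * (C * symbolWeight p q x) := by
        rw [integral_const_mul]
        exact mul_le_mul_of_nonneg_left (hC x) hAB
    _ = A * B * C * symbolWeight p q x := by ring

lemma fiberConvExists_of_hasSymbolOrder (hp : p < -1) (hq : q < -1) (hac : Continuous a)
    (ha : HasSymbolOrder 0 0 a) (hbc : Continuous b) (hb : HasSymbolOrder p q b) :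
    FiberConvExists a b := fun x => by
  obtain ⟨A, hA⟩ := hasSymbolOrder_iff.1 ha {x.1} isCompact_singleton
  obtain ⟨B, hB⟩ := hasSymbolOrder_iff.1 hb {x.1} isCompact_singleton
  simp only [symbolWeight_zero, mul_one] at hA
  refine .bdd_mul (c := A) ?_ ?_ (.of_forall fun t => hA x.1 rfl _)
  · exact ((integrable_symbolWeight hp hq).const_mul B).mono'
      (hbc.comp (by fun_prop)).aestronglyMeasurable (.of_forall fun t => hB x.1 rfl t)
  · exact (hac.comp (by fun_prop)).aestronglyMeasurable

variable [NormedSpace ℝ E]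

lemma IsProductSymbol.fiberConvExists (hp : p < -1) (hq : q < -1) (ha : IsProductSymbol 0 0 a)
    (hb : IsProductSymbol p q b) : FiberConvExists a b :=
  fiberConvExists_of_hasSymbolOrder hp hq ha.continuous ha.hasSymbolOrder hb.continuous
    hb.hasSymbolOrder

/-- The derivative at `x` of the integrand `a(z, y - t) b(z, t)` of `fiberConv a b` as a function of
`x = (z, y)`. -/
def fiberConvDeriv (a b : E × ℝ × ℝ → ℂ) (x : E × ℝ × ℝ) (t : ℝ × ℝ) : E × ℝ × ℝ →L[ℝ] ℂ :=
  a (x.1, x.2 - t) • fderiv ℝ b (x.1, t) ∘L .inl ℝ E (ℝ × ℝ) ∘L .fst ℝ E (ℝ × ℝ) +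
    b (x.1, t) • fderiv ℝ a (x.1, x.2 - t)

lemma hasFDerivAt_fiberConvDeriv (ha : Differentiable ℝ a) (hb : Differentiable ℝ b)
    (x : E × ℝ × ℝ) (t : ℝ × ℝ) :
    HasFDerivAt (fun x : E × ℝ × ℝ => a (x.1, x.2 - t) * b (x.1, t)) (fiberConvDeriv a b x t)
      x := by
  have hshift : HasFDerivAt (fun x : E × ℝ × ℝ => (x.1, x.2 - t)) (.id ℝ (E × ℝ × ℝ)) x := by
    simpa [Prod.sub_def] using! (hasFDerivAt_id x).sub_const ((0, t) : E × ℝ × ℝ)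
  have hbase : HasFDerivAt (fun x : E × ℝ × ℝ => (x.1, t))
      (.inl ℝ E (ℝ × ℝ) ∘L .fst ℝ E (ℝ × ℝ)) x :=
    (hasFDerivAt_prodMk_left x.1 t).comp x (hasFDerivAt_fst (𝕜 := ℝ) (p := x))
  exact ((ha _).hasFDerivAt.comp x hshift).mul ((hb _).hasFDerivAt.comp x hbase)

lemma IsProductSymbol.continuous_fiberConvDeriv {p' q' : ℝ} (ha : IsProductSymbol p q a)
    (hb : IsProductSymbol p' q' b) (x : E × ℝ × ℝ) : Continuous (fiberConvDeriv a b x) := by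
  refine .add (.smul (ha.continuous.comp (by fun_prop)) (.clm_comp ?_ continuous_const))
    (.smul (hb.continuous.comp (by fun_prop)) ?_)
  · exact (hb.contDiff.continuous_fderiv (by simp)).comp (by fun_prop)
  · exact (ha.contDiff.continuous_fderiv (by simp)).comp (by fun_prop)

lemma exists_norm_fiberConvDeriv_le (ha : HasSymbolOrder 0 0 a)
    (ha' : HasSymbolOrder 0 0 (fderiv ℝ a)) (hb : HasSymbolOrder p q b)
    (hb' : HasSymbolOrder p q (fderiv ℝ b)) {K : Set E} (hK : IsCompact K) :
    ∃ C, ∀ x, x.1 ∈ K → ∀ t, ‖fiberConvDeriv a b x t‖ ≤ C * symbolWeight p q t := by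
  obtain ⟨A, hA⟩ := hasSymbolOrder_iff.1 ha K hK
  obtain ⟨A', hA'⟩ := hasSymbolOrder_iff.1 ha' K hK
  obtain ⟨B, hB⟩ := hasSymbolOrder_iff.1 hb K hK
  obtain ⟨B', hB'⟩ := hasSymbolOrder_iff.1 hb' K hK
  simp only [symbolWeight_zero, mul_one] at hA hA'
  have hproj : ‖(.inl ℝ E (ℝ × ℝ) ∘L .fst ℝ E (ℝ × ℝ) : E × ℝ × ℝ →L[ℝ] E × ℝ × ℝ)‖ ≤ 1 :=
    ContinuousLinearMap.opNorm_le_bound _ zero_le_one fun v => by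
      simpa using norm_fst_le v
  refine ⟨A * B' + B * A', fun x hx t => (norm_add_le _ _).trans ?_⟩
  have hA0 : 0 ≤ A := (norm_nonneg _).trans (hA x.1 hx t)
  have hcomp : ‖fderiv ℝ b (x.1, t) ∘L .inl ℝ E (ℝ × ℝ) ∘L .fst ℝ E (ℝ × ℝ)‖ ≤
      B' * symbolWeight p q t :=
    (ContinuousLinearMap.opNorm_comp_le _ _).trans <|
      (mul_le_of_le_one_right (norm_nonneg _) hproj).trans (hB' x.1 hx t)
  calc _ ≤ A * (B' * symbolWeight p q t) + B * symbolWeight p q t * A' := by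
        rw [norm_smul, norm_smul]
        exact add_le_add (mul_le_mul (hA x.1 hx _) hcomp (norm_nonneg _) hA0)
          (mul_le_mul (hB x.1 hx t) (hA' x.1 hx _) (norm_nonneg _)
            ((norm_nonneg _).trans (hB x.1 hx t)))
    _ = (A * B' + B * A') * symbolWeight p q t := by ring

lemma IsProductSymbol.integrable_fiberConvDeriv [FiniteDimensional ℝ E] (hp : p < -1) (hq : q < -1)
    (ha : IsProductSymbol 0 0 a) (hb : IsProductSymbol p q b) (x : E × ℝ × ℝ) :
    Integrable (fiberConvDeriv a b x) := by
  obtain ⟨C, hC⟩ := exists_norm_fiberConvDeriv_le ha.hasSymbolOrder ha.hasSymbolOrder_fderiv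
    hb.hasSymbolOrder hb.hasSymbolOrder_fderiv (isCompact_singleton (x := x.1))
  exact ((integrable_symbolWeight hp hq).const_mul C).mono'
    (ha.continuous_fiberConvDeriv hb x).aestronglyMeasurable (.of_forall (hC x rfl))

lemma IsProductSymbol.hasFDerivAt_fiberConv [FiniteDimensional ℝ E] (hp : p < -1) (hq : q < -1)
    (ha : IsProductSymbol 0 0 a) (hb : IsProductSymbol p q b) (x : E × ℝ × ℝ) :
    HasFDerivAt (fiberConv a b) (∫ t, fiberConvDeriv a b x t) x := by
  have := FiniteDimensional.proper ℝ E
  have hexists := ha.fiberConvExists hp hq hb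
  obtain ⟨C, hC⟩ := exists_norm_fiberConvDeriv_le ha.hasSymbolOrder ha.hasSymbolOrder_fderiv
    hb.hasSymbolOrder hb.hasSymbolOrder_fderiv (isCompact_closedBall x.1 1)
  exact hasFDerivAt_integral_of_dominated_of_fderiv_le
    (prod_mem_nhds (Metric.closedBall_mem_nhds x.1 one_pos) univ_mem)
    (.of_forall fun y => (hexists y).aestronglyMeasurable) (hexists x)
    (ha.continuous_fiberConvDeriv hb x).aestronglyMeasurable
    (.of_forall fun t y hy => hC y hy.1 t) ((integrable_symbolWeight hp hq).const_mul C)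
    (.of_forall fun t y _ => hasFDerivAt_fiberConvDeriv ha.differentiable hb.differentiable y t)

lemma IsProductSymbol.fderivAlong_fiberConv [FiniteDimensional ℝ E] (hp : p < -1) (hq : q < -1)
    (ha : IsProductSymbol 0 0 a) (hb : IsProductSymbol p q b) (v : E × ℝ × ℝ) :
    fderivAlong v (fiberConv a b) =
      fiberConv (fderivAlong v a) b + fiberConv a (fderivAlong (v.1, 0) b) := by
  ext x
  rw [fderivAlong_apply, (ha.hasFDerivAt_fiberConv hp hq hb x).fderiv,
    ContinuousLinearMap.integral_apply (ha.integrable_fiberConvDeriv hp hq hb x)]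
  refine .trans ?_ (integral_add ((ha.fderivAlong v).fiberConvExists hp hq hb x)
    (ha.fiberConvExists hp hq (hb.fderivAlong (v.1, 0)) x))
  congr with t
  simp [fiberConvDeriv, fderivAlong]
  ring

lemma IsProductSymbol.contDiff_fiberConv [FiniteDimensional ℝ E] (hp : p < -1) (hq : q < -1)
    (ha : IsProductSymbol 0 0 a) (hb : IsProductSymbol p q b) : ContDiff ℝ ∞ (fiberConv a b) := by
  refine contDiff_infty.2 fun n => ?_
  induction n generalizing a b with
  | zero =>
    exact contDiff_zero.2 <| continuous_iff_continuousAt.2 fun x =>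
      (ha.hasFDerivAt_fiberConv hp hq hb x).continuousAt
  | succ n ih =>
    push_cast
    refine contDiff_succ_iff_fderiv_apply.2
      ⟨fun x => (ha.hasFDerivAt_fiberConv hp hq hb x).differentiableAt, by simp, fun v => ?_⟩
    change ContDiff ℝ n (fderivAlong v (fiberConv a b))
    rw [ha.fderivAlong_fiberConv hp hq hb]
    exact (ih (ha.fderivAlong v) hb).add (ih ha (hb.fderivAlong (v.1, 0)))

lemma hasFDerivAt_comp_prodMk {f : E × ℝ × ℝ → ℂ} (hf : Differentiable ℝ f) (z : E) (t : ℝ × ℝ) :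
    HasFDerivAt (fun t => f (z, t)) (fderiv ℝ f (z, t) ∘L .inr ℝ E (ℝ × ℝ)) t :=
  (hf (z, t)).hasFDerivAt.comp t (hasFDerivAt_prodMk_right z t)

lemma fiberConv_fderivAlong_left (hp : p < -1) (hq : q < -1) (ha : IsProductSymbol p q a)
    (hb : IsProductSymbol 0 0 b) (w : ℝ × ℝ) :
    fiberConv (fderivAlong (0, w) a) b = fiberConv a (fderivAlong (0, w) b) := by
  ext x
  have hexists {a b : E × ℝ × ℝ → ℂ} (ha : IsProductSymbol p q a) (hb : IsProductSymbol 0 0 b) :=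
    (hb.fiberConvExists hp hq ha).symm x
  have hderiva (t : ℝ × ℝ) : HasFDerivAt (fun t => a (x.1, x.2 - t))
      (-(fderiv ℝ a (x.1, x.2 - t) ∘L .inr ℝ E (ℝ × ℝ))) t := by
    simpa using! (hasFDerivAt_comp_prodMk ha.differentiable x.1 (x.2 - t)).comp t
      ((hasFDerivAt_id t).const_sub x.2)
  have hderivb := hasFDerivAt_comp_prodMk hb.differentiable x.1
  have hparts := integral_mul_fderiv_eq_neg_fderiv_mul_of_integrable (μ := volume)
    (f := fun t => a (x.1, x.2 - t)) (g := fun t => b (x.1, t)) (v := w)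
    (by simpa [(hderiva _).fderiv] using! hexists (ha.fderivAlong (0, w)) hb)
    (by simpa [(hderivb _).fderiv] using! hexists ha (hb.fderivAlong (0, w)))
    (hexists ha hb)
    (fun t _ => (hderiva t).differentiableAt) (fun t _ => (hderivb t).differentiableAt)
  simpa [(hderiva _).fderiv, (hderivb _).fderiv, integral_neg] using! hparts.symm

-- Once `l` is split between the two factors, the derivative `∂_w` is moved onto the factor
-- multiplied by `l`, so that it compensates the growth of `l` in both terms.
lemma fiberCoord_mul_fderivAlong_fiberConv [FiniteDimensional ℝ E] (hp : p < -1) (hq : q < -1)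
    {l : ℝ × ℝ →L[ℝ] ℝ} {w : ℝ × ℝ} (ha : IsProductSymbol p q a) (hb : IsProductSymbol p q b)
    (hla : IsProductSymbol p q (fiberCoord l * fderivAlong (0, w) a)) :
    fiberCoord l * fderivAlong (0, w) (fiberConv a b) =
      fiberConv (fiberCoord l * fderivAlong (0, w) a) b +
        fiberConv a (fderivAlong (0, w) (fiberCoord l * b)) := by
  have bounded {f : E × ℝ × ℝ → ℂ} (hf : IsProductSymbol p q f) : IsProductSymbol 0 0 f :=
    hf.mono (by linarith) (by linarith)
  have hlb : IsProductSymbol 0 0 (fiberCoord l * b) :=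
    ((isProductSymbol_fiberCoord l).mul hb).mono (by linarith) (by linarith)
  have hleft : fderivAlong (0, w) (fiberConv a b) = fiberConv (fderivAlong (0, w) a) b := by
    have hzero : fderivAlong ((0 : E), (0 : ℝ × ℝ)) b = 0 := by
      ext x; exact map_zero (fderiv ℝ b x)
    rw [(bounded ha).fderivAlong_fiberConv hp hq hb, hzero, fiberConv_zero_right, add_zero]
  have hexists_la := ((bounded hb).fiberConvExists hp hq hla).symm
  have hexists_lb := (hlb.fiberConvExists hp hq (ha.fderivAlong (0, w))).symm
  rw [hleft, hexists_la.fiberCoord_mul_fiberConv hexists_lb,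
    fiberConv_fderivAlong_left hp hq ha hlb]

end FiberConv

theorem convolution_isProdSymbolOfOrder_general {E : Type*} [NormedAddCommGroup E]
    [NormedSpace ℝ E] [FiniteDimensional ℝ E] {p q : ℝ} (hp : p < -1) (hq : q < -1)
    {a b : E × ℝ × ℝ → ℂ} (ha : IsProductSymbol p q a) (hb : IsProductSymbol p q b) :
    IsProductSymbol p q (fiberConv a b) := by
  intro n
  have bounded {f : E × ℝ × ℝ → ℂ} (hf : IsProductSymbol p q f) : IsProductSymbol 0 0 f :=
    hf.mono (by linarith) (by linarith)
  induction n generalizing a b with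
  | zero =>
    exact ⟨(bounded ha).contDiff_fiberConv hp hq hb,
      hasSymbolOrder_fiberConv hp hq ha.hasSymbolOrder hb.hasSymbolOrder⟩
  | succ n ih =>
    have hderiv (v : E × ℝ × ℝ) : IsSymbolUpTo n p q (fderivAlong v (fiberConv a b)) := by
      rw [(bounded ha).fderivAlong_fiberConv hp hq hb]
      exact (ih (ha.fderivAlong v) hb).add (ih ha (hb.fderivAlong (v.1, 0)))
    have hmul {l : ℝ × ℝ →L[ℝ] ℝ} {w : ℝ × ℝ}
        (hla : IsProductSymbol p q (fiberCoord l * fderivAlong (0, w) a))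
        (hlb : IsProductSymbol p q (fderivAlong (0, w) (fiberCoord l * b))) :
        IsSymbolUpTo n p q (fiberCoord l * fderivAlong (0, w) (fiberConv a b)) := by
      rw [fiberCoord_mul_fderivAlong_fiberConv hp hq ha hb hla]
      exact (ih hla hb).add (ih ha hlb)
    have hξ (l : ℝ × ℝ →L[ℝ] ℝ) := hmul (l := l) (w := (1, 0))
      (((isProductSymbol_fiberCoord l).mul ha.fderivAlong_fst).mono (by simp) (by simp))
      (((isProductSymbol_fiberCoord l).mul hb).fderivAlong_fst.mono (by simp) (by simp))
    have hη := hmul (l := .snd ℝ ℝ ℝ) (w := (0, 1))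
      ((isProductSymbol_fiberCoord_snd.mul ha.fderivAlong_snd).mono (by simp) (by simp))
      ((isProductSymbol_fiberCoord_snd.mul hb).fderivAlong_snd.mono (by simp) (by simp))
    exact ⟨ih ha hb, fun v => hderiv (v, 0), (hderiv _).of_fiberCoord_mul (hξ _) (hξ _),
      (hderiv _).of_fiberCoord_snd_mul hη⟩

/-- If `m < -1` and `a, b` are (smooth) product-type symbols of order `(m, m)`, then the
fiberwise convolution `c(z,ξ,η) = ∬ a(z,ξ-ζ,η-τ) b(z,ζ,τ) dζ dτ` satisfies the same
product-type symbol estimates. -/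
theorem convolution_isProdSymbolOfOrder {M : ℕ} (m : ℝ) (hm : m < -1)
    (a b : (Fin M → ℝ) → ℝ → ℝ → ℂ)
    (ha : ContDiff ℝ (⊤ : ℕ∞) (fun p : (Fin M → ℝ) × ℝ × ℝ => a p.1 p.2.1 p.2.2))
    (hb : ContDiff ℝ (⊤ : ℕ∞) (fun p : (Fin M → ℝ) × ℝ × ℝ => b p.1 p.2.1 p.2.2))
    (hsa : IsProdSymbolOfOrder m a) (hsb : IsProdSymbolOfOrder m b) :
    IsProdSymbolOfOrder m
      (fun z ξ η => ∫ p : ℝ × ℝ, a z (ξ - p.1) (η - p.2) * b z p.1 p.2) := by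
  exact (convolution_isProdSymbolOfOrder_general hm hm (hsa.isProductSymbol ha)
    (hsb.isProductSymbol hb)).isProdSymbolOfOrder
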